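/- arXiv:2112.14803 — 2 statements merged into one kernel-verified Lean document; each statement's English description precedes it below -/
import Mathlib

section
/- Let q ≡ 0 (mod 3) be a prime power with q ≥ 9. The group G_q acts transitively on the points of the axis ℓ_A of Γ, i.e. for any two points R, S on the line with equations x0 = x3 = 0 there exists φ ∈ G_q with Rφ = S. -/
open Matrix Submodule

noncomputable section

/-- Row-vector action of an invertible matrix on subspaces of `F^4`:
a projectivity of `PG(3,q)` induced by the matrix. -/
def projAct (F : Type) [Field F] (A : GL (Fin 4) F) :
    Submodule F (Fin 4 → F) → Submodule F (Fin 4 → F) :=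
  fun W => W.map (Matrix.vecMulLinear (A : Matrix (Fin 4) (Fin 4) F))

/-- Representative vectors of the points of the twisted cubic. -/
def cubicVecs (F : Type) [Field F] : Set (Fin 4 → F) :=
  {v | (∃ t : F, v = ![t ^ 3, t ^ 2, t, 1]) ∨ v = ![1, 0, 0, 0]}

/-- The twisted cubic, as a set of projective points (1-dimensional subspaces). -/
def twistedCubic (F : Type) [Field F] : Set (Submodule F (Fin 4 → F)) :=
  (fun v => Submodule.span F {v}) '' cubicVecs F

/-- The group `G_q` of projectivities fixing the twisted cubic, modeled as those maps
on subspaces that are induced by an invertible matrix and map the cubic onto itself. -/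
def Gq (F : Type) [Field F] :
    Set ((Submodule F (Fin 4 → F)) → (Submodule F (Fin 4 → F))) :=
  {f | (∃ A : GL (Fin 4) F, f = projAct F A) ∧ f '' twistedCubic F = twistedCubic F}

def isPoint (F : Type) [Field F] (W : Submodule F (Fin 4 → F)) : Prop :=
  Module.finrank F W = 1

def isLine (F : Type) [Field F] (W : Submodule F (Fin 4 → F)) : Prop :=
  Module.finrank F W = 2

/-- The orbit of a line under `G_q`. -/
def lineOrbit (F : Type) [Field F] (ℓ : Submodule F (Fin 4 → F)) :
    Set (Submodule F (Fin 4 → F)) :=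
  {m | ∃ f ∈ Gq F, f ℓ = m}

/-- The stabilizer of a line in `G_q`. -/
def lineStab (F : Type) [Field F] (ℓ : Submodule F (Fin 4 → F)) :
    Set ((Submodule F (Fin 4 → F)) → (Submodule F (Fin 4 → F))) :=
  {f ∈ Gq F | f ℓ = ℓ}

/-- The linear form `y ↦ c0 y0 + c1 y1 + c2 y2 + c3 y3` defining a plane. -/
def planeForm (F : Type) [Field F] (c : Fin 4 → F) : (Fin 4 → F) →ₗ[F] F where
  toFun y := c 0 * y 0 + c 1 * y 1 + c 2 * y 2 + c 3 * y 3
  map_add' a b := by simp only [Pi.add_apply]; ring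
  map_smul' r a := by simp only [Pi.smul_apply, smul_eq_mul, RingHom.id_apply]; ring

/-- The plane `π(c0,c1,c2,c3)`. -/
def planeOf (F : Type) [Field F] (c : Fin 4 → F) : Submodule F (Fin 4 → F) :=
  LinearMap.ker (planeForm F c)

/-- The null polarity `𝔄`: the polar subspace of `W` w.r.t. the bilinear form
sending a point `(x0:x1:x2:x3)` to the plane `π(x3, −3x2, 3x1, −x0)`. -/
def nullPolarity (F : Type) [Field F] (W : Submodule F (Fin 4 → F)) :
    Submodule F (Fin 4 → F) :=
  ⨅ x ∈ (W : Set (Fin 4 → F)), planeOf F ![x 3, -(3 * x 2), 3 * x 1, -(x 0)]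

/-- The tangent line to the twisted cubic at `P(t)`, `t ∈ F`. -/
def tangentAt (F : Type) [Field F] (t : F) : Submodule F (Fin 4 → F) :=
  Submodule.span F {![t ^ 3, t ^ 2, t, 1], ![3 * t ^ 2, 2 * t, 1, 0]}

/-- The tangent line to the twisted cubic at `P(∞)`. -/
def tangentAtInf (F : Type) [Field F] : Submodule F (Fin 4 → F) :=
  Submodule.span F {![1, 0, 0, 0], ![0, 1, 0, 0]}

def isTangent (F : Type) [Field F] (ℓ : Submodule F (Fin 4 → F)) : Prop :=
  (∃ t : F, ℓ = tangentAt F t) ∨ ℓ = tangentAtInf F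

/-- The osculating plane at `P(t)`, `t ∈ F`. -/
def oscPlane (F : Type) [Field F] (t : F) : Submodule F (Fin 4 → F) :=
  planeOf F ![1, -(3 * t), 3 * t ^ 2, -(t ^ 3)]

/-- The osculating plane at `P(∞)`. -/
def oscPlaneInf (F : Type) [Field F] : Submodule F (Fin 4 → F) :=
  planeOf F ![0, 0, 0, 1]

def isOscPlane (F : Type) [Field F] (π : Submodule F (Fin 4 → F)) : Prop :=
  (∃ t : F, π = oscPlane F t) ∨ π = oscPlaneInf F

/-- A real chord: the line joining two distinct points of the twisted cubic. -/
def isRealChord (F : Type) [Field F] (ℓ : Submodule F (Fin 4 → F)) : Prop :=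
  ∃ u ∈ cubicVecs F, ∃ v ∈ cubicVecs F,
    Submodule.span F {u} ≠ Submodule.span F {v} ∧ ℓ = Submodule.span F {u, v}

/-- A real axis: the intersection of two distinct osculating planes. -/
def isRealAxis (F : Type) [Field F] (ℓ : Submodule F (Fin 4 → F)) : Prop :=
  ∃ π₁ π₂ : Submodule F (Fin 4 → F),
    isOscPlane F π₁ ∧ isOscPlane F π₂ ∧ π₁ ≠ π₂ ∧ ℓ = π₁ ⊓ π₂

/-- The `F_{q²}`-extension of a subspace of `F^4`. -/
def extendSub (F K : Type) [Field F] [Field K] [Algebra F K]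
    (W : Submodule F (Fin 4 → F)) : Submodule K (Fin 4 → K) :=
  Submodule.span K ((fun v i => algebraMap F K (v i)) '' (W : Set (Fin 4 → F)))

/-- An external line: a line containing no point of the twisted cubic. -/
def isExternal (F : Type) [Field F] (ℓ : Submodule F (Fin 4 → F)) : Prop :=
  isLine F ℓ ∧ ∀ P ∈ twistedCubic F, ¬ P ≤ ℓ

/-- An imaginary chord: a line disjoint from the cubic whose `F_{q²}`-extension joins a
pair of Frobenius-conjugate points `P(t)`, `P(t^q)` of the cubic over `F_{q²}`. -/
def isImagChord (F K : Type) [Field F] [Field K] [Algebra F K] (q : ℕ)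
    (ℓ : Submodule F (Fin 4 → F)) : Prop :=
  isExternal F ℓ ∧
  ∃ t : K, t ∉ Set.range (algebraMap F K) ∧
    extendSub F K ℓ =
      Submodule.span K
        ({![t ^ 3, t ^ 2, t, 1], ![(t ^ q) ^ 3, (t ^ q) ^ 2, t ^ q, 1]} :
          Set (Fin 4 → K))

/-- An imaginary axis: a line whose `F_{q²}`-extension is the intersection of a pair of
Frobenius-conjugate osculating planes `π_osc(t)`, `π_osc(t^q)` over `F_{q²}`. -/
def isImagAxis (F K : Type) [Field F] [Field K] [Algebra F K] (q : ℕ)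
    (ℓ : Submodule F (Fin 4 → F)) : Prop :=
  isLine F ℓ ∧
  ∃ t : K, t ∉ Set.range (algebraMap F K) ∧
    extendSub F K ℓ =
      planeOf K ![1, -(3 * t), 3 * t ^ 2, -(t ^ 3)] ⊓
        planeOf K ![1, -(3 * t ^ q), 3 * (t ^ q) ^ 2, -((t ^ q) ^ 3)]

/-- A unisecant: a line meeting the twisted cubic in exactly one point. -/
def isUnisecant (F : Type) [Field F] (ℓ : Submodule F (Fin 4 → F)) : Prop :=
  isLine F ℓ ∧ ∃! P, P ∈ twistedCubic F ∧ P ≤ ℓ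

/-- A `UΓ`-line: a non-tangent unisecant lying in some osculating plane. -/
def isUGamma (F : Type) [Field F] (ℓ : Submodule F (Fin 4 → F)) : Prop :=
  isUnisecant F ℓ ∧ ¬ isTangent F ℓ ∧ ∃ π, isOscPlane F π ∧ ℓ ≤ π

/-- A `UnΓ`-line: a non-tangent unisecant lying in no osculating plane. -/
def isUnGamma (F : Type) [Field F] (ℓ : Submodule F (Fin 4 → F)) : Prop :=
  isUnisecant F ℓ ∧ ¬ isTangent F ℓ ∧ ∀ π, isOscPlane F π → ¬ ℓ ≤ π

/-- An `EΓ`-line: an external line, other than an imaginary chord, lying in some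
osculating plane. -/
def isEGamma (F K : Type) [Field F] [Field K] [Algebra F K] (q : ℕ)
    (ℓ : Submodule F (Fin 4 → F)) : Prop :=
  isExternal F ℓ ∧ ¬ isImagChord F K q ℓ ∧ ∃ π, isOscPlane F π ∧ ℓ ≤ π

/-- For `q ≡ 0 (mod 3)`: the axis of `Γ`, the line `x0 = x3 = 0`. -/
def axisLine (F : Type) [Field F] : Submodule F (Fin 4 → F) :=
  Submodule.span F {![0, 1, 0, 0], ![0, 0, 1, 0]}

/-- For `q ≡ 0 (mod 3)`: an `EA`-line, i.e. an external line, other than an imaginary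
chord and other than the axis of `Γ`, meeting the axis of `Γ`. -/
def isEA (F K : Type) [Field F] [Field K] [Algebra F K] (q : ℕ)
    (ℓ : Submodule F (Fin 4 → F)) : Prop :=
  isExternal F ℓ ∧ ¬ isImagChord F K q ℓ ∧ ℓ ≠ axisLine F ∧ ℓ ⊓ axisLine F ≠ ⊥

end

/-!
The binary-form parametrization `(s, u) ↦ (s³, s²u, su², u³)` makes the twisted cubic the image of
the projective line, and the symmetric cube carries `GL₂` into the stabilizer of the cubic. In
characteristic 3 the vectors with vanishing outer coordinates form a `GL₂`-submodule of the
symmetric cube, isomorphic up to a determinant twist to the standard representation. As `GL₂` is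
transitive on nonzero vectors of the plane, it is transitive on the points of the axis.
-/

section Transitivity

theorem exists_linearEquiv_apply_eq {K V : Type*} [DivisionRing K] [AddCommGroup V] [Module K V]
    {v w : V} (hv : v ≠ 0) (hw : w ≠ 0) : ∃ e : V ≃ₗ[K] V, e v = w := by
  let spanEquiv : span K {v} ≃ₗ[K] span K {w} :=
    LinearEquiv.coord K V v hv ≪≫ₗ LinearEquiv.toSpanNonzeroSingleton K V w hw
  obtain ⟨e, he⟩ := exists_linearEquiv_restrict_eq spanEquiv
  refine ⟨e, ?_⟩
  rw [← he ⟨v, mem_span_singleton_self v⟩]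
  simp [spanEquiv, LinearEquiv.coord_self]

theorem exists_generalLinearGroup_vecMul_eq {n K : Type*} [Fintype n] [DecidableEq n] [Field K]
    {v w : n → K} (hv : v ≠ 0) (hw : w ≠ 0) : ∃ g : GL n K, v ᵥ* (g : Matrix n n K) = w := by
  obtain ⟨e, he⟩ := exists_linearEquiv_apply_eq (K := K) hv hw
  refine ⟨⟨e.toLinearMap.toMatrixRight', e.symm.toLinearMap.toMatrixRight', ?_, ?_⟩, ?_⟩
  · simp [← LinearMap.toMatrixRight'_comp]
  · simp [← LinearMap.toMatrixRight'_comp]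
  · rw [← he]
    exact LinearMap.congr_fun (toLinearMapRight'.apply_symm_apply e.toLinearMap) v

end Transitivity

theorem charP_of_prime_dvd_card {F : Type*} [Field F] [Fintype F] {p : ℕ} [Fact p.Prime]
    (hp : p ∣ Fintype.card F) : CharP F p :=
  (CharP.charP_iff_prime_eq_zero Fact.out).mpr <|
    not_not.mp fun h => not_isUnit_prime_of_dvd_card hp (isUnit_iff_ne_zero.mpr h)

section SymCube

variable {R : Type*} [CommRing R]

/-- The cubic Veronese map `(s, u) ↦ (s³, s²u, su², u³)`, which parametrizes the twisted cubic by
homogeneous coordinates on the projective line. -/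
def cubicVec (w : Fin 2 → R) : Fin 4 → R :=
  ![w 0 ^ 3, w 0 ^ 2 * w 1, w 0 * w 1 ^ 2, w 1 ^ 3]

/-- The parametrization `(x, y) ↦ (0, x, -y, 0)` of the axis `x₀ = x₃ = 0`. The sign makes it
equivariant in characteristic 3, see `axisVec_vecMul_symCube`. -/
def axisVec (w : Fin 2 → R) : Fin 4 → R :=
  ![0, w 0, -w 1, 0]

/-- The symmetric cube of a binary linear substitution, as a matrix acting on row vectors: its rows
are the coefficients of `s³, s²u, su², u³` in `cubicVec ((s, u) ᵥ* M)`. -/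
def symCube : Matrix (Fin 2) (Fin 2) R →* Matrix (Fin 4) (Fin 4) R where
  toFun M :=
    let a := M 0 0
    let b := M 0 1
    let c := M 1 0
    let d := M 1 1
    !![a ^ 3, a ^ 2 * b, a * b ^ 2, b ^ 3;
      3 * a ^ 2 * c, a ^ 2 * d + 2 * a * b * c, b ^ 2 * c + 2 * a * b * d, 3 * b ^ 2 * d;
      3 * a * c ^ 2, b * c ^ 2 + 2 * a * c * d, a * d ^ 2 + 2 * b * c * d, 3 * b * d ^ 2;
      c ^ 3, c ^ 2 * d, c * d ^ 2, d ^ 3]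
  map_one' := by
    ext i j
    fin_cases i <;> fin_cases j <;> simp
  map_mul' M N := by
    ext i j
    fin_cases i <;> fin_cases j <;> simp [mul_apply, Fin.sum_univ_succ] <;> ring

theorem cubicVec_smul (r : R) (w : Fin 2 → R) : cubicVec (r • w) = r ^ 3 • cubicVec w := by
  ext i
  fin_cases i <;> simp [cubicVec] <;> ring

theorem cubicVec_vecMul_symCube (w : Fin 2 → R) (M : Matrix (Fin 2) (Fin 2) R) :
    cubicVec w ᵥ* symCube M = cubicVec (w ᵥ* M) := by
  ext i
  fin_cases i <;> simp [symCube, cubicVec, vecMul, dotProduct, Fin.sum_univ_succ] <;> ring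

theorem axisVec_vecMul_symCube [CharP R 3] (w : Fin 2 → R) (M : Matrix (Fin 2) (Fin 2) R) :
    axisVec w ᵥ* symCube M = M.det • axisVec (w ᵥ* M) := by
  have three_eq_zero : (3 : R) = 0 := CharP.cast_eq_zero R 3
  have two_eq_neg_one : (2 : R) = -1 := by linear_combination three_eq_zero
  ext i
  fin_cases i <;>
    simp [symCube, axisVec, vecMul, dotProduct, Fin.sum_univ_succ, det_fin_two, three_eq_zero,
      two_eq_neg_one] <;> ring

end SymCube

section Points

variable {F : Type} [Field F]

theorem span_cubicVec_smul {r : F} (hr : r ≠ 0) (w : Fin 2 → F) :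
    span F {cubicVec (r • w)} = span F {cubicVec w} := by
  rw [cubicVec_smul]
  exact span_singleton_smul_eq (pow_ne_zero 3 hr).isUnit _

theorem span_cubicVec_mem_twistedCubic {w : Fin 2 → F} (hw : w ≠ 0) :
    span F {cubicVec w} ∈ twistedCubic F := by
  by_cases hw1 : w 1 = 0
  · have hw0 : w 0 ≠ 0 := fun hw0 => hw (by ext i; fin_cases i <;> assumption)
    have w_eq : w = w 0 • ![1, 0] := by ext i; fin_cases i <;> simp [hw1]
    rw [w_eq, span_cubicVec_smul hw0]
    exact ⟨_, Or.inr rfl, by simp [cubicVec]⟩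
  · have w_eq : w = w 1 • ![w 0 / w 1, 1] := by
      ext i; fin_cases i <;> simp [mul_div_cancel₀, hw1]
    rw [w_eq, span_cubicVec_smul hw1]
    exact ⟨_, Or.inl ⟨w 0 / w 1, rfl⟩, by simp [cubicVec]⟩

theorem mem_twistedCubic_iff {P : Submodule F (Fin 4 → F)} :
    P ∈ twistedCubic F ↔ ∃ w : Fin 2 → F, w ≠ 0 ∧ P = span F {cubicVec w} := by
  constructor
  · rintro ⟨_, ⟨t, rfl⟩ | rfl, rfl⟩
    · exact ⟨![t, 1], by simp, by simp [cubicVec]⟩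
    · exact ⟨![1, 0], by simp, by simp [cubicVec]⟩
  · rintro ⟨w, hw, rfl⟩
    exact span_cubicVec_mem_twistedCubic hw

theorem exists_eq_span_axisVec {P : Submodule F (Fin 4 → F)} (hP : isPoint F P)
    (hP_axis : P ≤ axisLine F) : ∃ w : Fin 2 → F, w ≠ 0 ∧ P = span F {axisVec w} := by
  have P_ne_bot : P ≠ ⊥ := by
    rintro rfl
    simp [isPoint] at hP
  obtain ⟨v, hv, v_ne_zero⟩ := exists_mem_ne_zero_of_ne_bot P_ne_bot
  obtain ⟨x, y, rfl⟩ := mem_span_pair.mp (hP_axis hv)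
  have v_eq : x • ![0, 1, 0, 0] + y • ![0, 0, 1, 0] = axisVec ![x, -y] := by simp [axisVec]
  rw [v_eq] at hv v_ne_zero
  have w_ne_zero : ![x, -y] ≠ 0 := fun w_eq_zero =>
    v_ne_zero (by rw [w_eq_zero]; simp [axisVec])
  exact ⟨_, w_ne_zero, eq_span_singleton_of_mem_of_finrank_eq_one hP hv v_ne_zero⟩

end Points

section Projectivities

variable {F : Type} [Field F]

theorem projAct_span_singleton (A : GL (Fin 4) F) (v : Fin 4 → F) :
    projAct F A (span F {v}) = span F {v ᵥ* (A : Matrix (Fin 4) (Fin 4) F)} := by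
  simp [projAct, map_span]

theorem projAct_symCube_span_cubicVec (g : GL (Fin 2) F) (w : Fin 2 → F) :
    projAct F (Units.map symCube g) (span F {cubicVec w}) =
      span F {cubicVec (w ᵥ* (g : Matrix (Fin 2) (Fin 2) F))} := by
  rw [projAct_span_singleton, Units.coe_map, cubicVec_vecMul_symCube]

theorem projAct_symCube_span_axisVec [CharP F 3] (g : GL (Fin 2) F) (w : Fin 2 → F) :
    projAct F (Units.map symCube g) (span F {axisVec w}) =
      span F {axisVec (w ᵥ* (g : Matrix (Fin 2) (Fin 2) F))} := by
  have det_isUnit := (isUnit_iff_isUnit_det _).mp g.isUnit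
  rw [projAct_span_singleton, Units.coe_map, axisVec_vecMul_symCube,
    span_singleton_smul_eq det_isUnit]

theorem projAct_symCube_mapsTo_twistedCubic (g : GL (Fin 2) F) :
    Set.MapsTo (projAct F (Units.map symCube g)) (twistedCubic F) (twistedCubic F) := by
  intro P hP
  obtain ⟨w, hw, rfl⟩ := mem_twistedCubic_iff.mp hP
  rw [projAct_symCube_span_cubicVec]
  have vecMul_ne_zero : w ᵥ* (g : Matrix (Fin 2) (Fin 2) F) ≠ 0 := by
    simpa using (vecMul_injective_of_isUnit g.isUnit).ne hw
  exact span_cubicVec_mem_twistedCubic vecMul_ne_zero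

theorem projAct_symCube_mem_Gq (g : GL (Fin 2) F) : projAct F (Units.map symCube g) ∈ Gq F := by
  refine ⟨⟨_, rfl⟩, (projAct_symCube_mapsTo_twistedCubic g).image_subset.antisymm ?_⟩
  intro P hP
  refine ⟨_, projAct_symCube_mapsTo_twistedCubic g⁻¹ hP, ?_⟩
  obtain ⟨w, -, rfl⟩ := mem_twistedCubic_iff.mp hP
  simp_rw [projAct_symCube_span_cubicVec, vecMul_vecMul, ← Units.val_mul, inv_mul_cancel,
    Units.val_one, vecMul_one]

end Projectivities

theorem stmt_17_general (F : Type) [Field F] [CharP F 3] (R S : Submodule F (Fin 4 → F))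
    (hR : isPoint F R) (hS : isPoint F S) (hR_axis : R ≤ axisLine F) (hS_axis : S ≤ axisLine F) :
    ∃ f ∈ Gq F, f R = S := by
  obtain ⟨v, hv, rfl⟩ := exists_eq_span_axisVec hR hR_axis
  obtain ⟨w, hw, rfl⟩ := exists_eq_span_axisVec hS hS_axis
  obtain ⟨g, rfl⟩ := exists_generalLinearGroup_vecMul_eq hv hw
  exact ⟨_, projAct_symCube_mem_Gq g, projAct_symCube_span_axisVec g v⟩

theorem stmt_17 (q : ℕ) (F : Type) [Field F] [Fintype F]
    (hcard : Fintype.card F = q) (hq : 9 ≤ q) (hq3 : q % 3 = 0) :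
    ∀ R S : Submodule F (Fin 4 → F), isPoint F R → isPoint F S →
      R ≤ axisLine F → S ≤ axisLine F → ∃ f ∈ Gq F, f R = S := by
  have : CharP F 3 := charP_of_prime_dvd_card (hcard ▸ Nat.dvd_of_mod_eq_zero hq3)
  exact stmt_17_general F
end

section
/- Let q ≡ 0 (mod 3) be a prime power with q ≥ 9, and let ρ ∈ F_q be a non-square. The line ℓ1 through (0:1:0:0) and (0:0:1:1), the line ℓ2 through (0:1:0:0) and (1:0:1:0), and the line ℓ3 through (0:1:0:0) and (1:0:ρ:0) are EA-lines of the twisted cubic C, i.e. each is an external line, other than an imaginary chord and other than the axis ℓ_A, meeting ℓ_A (each meets ℓ_A in the point (0:1:0:0)). -/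
open Matrix Submodule

/-!
Projecting the twisted cubic from the point `(0:1:0:0)` of the axis gives the cuspidal cubic
`x₂³ = x₀x₃²`. Hence a line through `(0:1:0:0)` and a point `w` off the cone with this equation
contains no point of the cubic, and this persists over every extension field, because the value of
`x₂³ - x₀x₃²` at `w` stays nonzero there. So such a line is external and is not an imaginary chord.
-/

theorem span_pair_inf_eq_span_singleton {k V : Type*} [DivisionRing k] [AddCommGroup V]
    [Module k V] {A : Submodule k V} {v w : V} (hv : v ∈ A) (hw : w ∉ A) :
    span k {v, w} ⊓ A = span k {v} := by
  have hdisj : Disjoint A (span k {w}) := disjoint_span_singleton_of_notMem hw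
  rw [span_insert, sup_inf_assoc_of_le _ ((span_singleton_le_iff_mem v A).2 hv),
    hdisj.symm.eq_bot, sup_bot_eq]

/-- The cubic form `x₂³ - x₀x₃²`, whose zero locus is the cone with vertex `(0:1:0:0)` over the
twisted cubic. -/
def cuspidalForm {R : Type*} [CommRing R] (v : Fin 4 → R) : R :=
  v 2 ^ 3 - v 0 * v 3 ^ 2

theorem cuspidalForm_smul_vertex_add_smul {R : Type*} [CommRing R] (a b : R) (w : Fin 4 → R) :
    cuspidalForm (a • ![0, 1, 0, 0] + b • w) = b ^ 3 * cuspidalForm w := by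
  simp only [cuspidalForm, Pi.add_apply, Pi.smul_apply, smul_eq_mul, cons_val, mul_zero, zero_add]
  ring

theorem cuspidalForm_map {R S : Type*} [CommRing R] [CommRing S] (f : R →+* S)
    (v : Fin 4 → R) : cuspidalForm (f ∘ v) = f (cuspidalForm v) := by
  simp [cuspidalForm]

/-- The join of the cone vertex `(0:1:0:0)` with the point represented by `w`; it is a line
unless `w` represents the vertex or is zero. -/
abbrev vertexJoin (F : Type*) [Field F] (w : Fin 4 → F) : Submodule F (Fin 4 → F) :=
  span F {![0, 1, 0, 0], w}

section

variable {F : Type} [Field F] {v w : Fin 4 → F}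

theorem mem_axisLine_iff : v ∈ axisLine F ↔ v 0 = 0 ∧ v 3 = 0 := by
  rw [axisLine, mem_span_pair]
  constructor
  · rintro ⟨a, b, rfl⟩
    simp
  · rintro ⟨h₀, h₃⟩
    refine ⟨v 1, v 2, funext fun i => ?_⟩
    fin_cases i <;> simp [h₀, h₃]

theorem cuspidalForm_eq_zero_of_mem_cubicVecs (hv : v ∈ cubicVecs F) : cuspidalForm v = 0 := by
  rcases hv with ⟨t, rfl⟩ | rfl <;> simp [cuspidalForm]

theorem notMem_axisLine_of_mem_cubicVecs (hv : v ∈ cubicVecs F) : v ∉ axisLine F := by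
  rw [mem_axisLine_iff]
  rcases hv with ⟨t, rfl⟩ | rfl <;> simp

theorem vertex_mem_axisLine : ![0, 1, 0, 0] ∈ axisLine F := by
  simp [mem_axisLine_iff]

theorem mem_axisLine_of_mem_vertexJoin (hw : cuspidalForm w ≠ 0) (hv : v ∈ vertexJoin F w)
    (hv₀ : cuspidalForm v = 0) : v ∈ axisLine F := by
  obtain ⟨a, b, rfl⟩ := mem_span_pair.1 hv
  rw [cuspidalForm_smul_vertex_add_smul] at hv₀
  have hb : b = 0 := eq_zero_of_pow_eq_zero ((mul_eq_zero_iff_right hw).1 hv₀)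
  rw [hb, zero_smul, add_zero]
  exact (axisLine F).smul_mem a vertex_mem_axisLine

theorem notMem_vertexJoin_of_mem_cubicVecs (hw : cuspidalForm w ≠ 0) (hv : v ∈ cubicVecs F) :
    v ∉ vertexJoin F w := fun hmem =>
  notMem_axisLine_of_mem_cubicVecs hv <|
    mem_axisLine_of_mem_vertexJoin hw hmem (cuspidalForm_eq_zero_of_mem_cubicVecs hv)

theorem isLine_vertexJoin (hw : w ∉ span F {![0, 1, 0, 0]}) : isLine F (vertexJoin F w) := by
  have hli : LinearIndependent F ![![0, 1, 0, 0], w] :=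
    (LinearIndependent.pair_iff' fun h => by simpa using congrFun h 1).2 fun a ha =>
      hw (mem_span_singleton.2 ⟨a, ha⟩)
  rw [isLine, vertexJoin, ← range_cons_cons_empty _ _ ![]]
  exact finrank_span_eq_card hli

theorem isExternal_vertexJoin (hw : cuspidalForm w ≠ 0) : isExternal F (vertexJoin F w) := by
  refine ⟨isLine_vertexJoin fun hmem => ?_, ?_⟩
  · obtain ⟨a, rfl⟩ := mem_span_singleton.1 hmem
    exact hw (by simp [cuspidalForm])
  · rintro _ ⟨v, hv, rfl⟩ hle
    exact notMem_vertexJoin_of_mem_cubicVecs hw hv ((span_singleton_le_iff_mem _ _).1 hle)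

theorem vertexJoin_inf_axisLine (hw : w ∉ axisLine F) :
    vertexJoin F w ⊓ axisLine F = span F {![0, 1, 0, 0]} :=
  span_pair_inf_eq_span_singleton vertex_mem_axisLine hw

variable (K : Type) [Field K] [Algebra F K]

theorem extendSub_span (S : Set (Fin 4 → F)) :
    extendSub F K (span F S) = span K ((fun v => algebraMap F K ∘ v) '' S) := by
  have himage := map_coe ((Algebra.linearMap F K).compLeft (Fin 4)) (span F S)
  rw [map_span] at himage
  exact (congrArg (span K) himage.symm).trans (span_span_of_tower F K _)

theorem extendSub_vertexJoin (w : Fin 4 → F) :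
    extendSub F K (vertexJoin F w) = vertexJoin K (algebraMap F K ∘ w) := by
  have hvertex : algebraMap F K ∘ ![0, 1, 0, 0] = ![0, 1, 0, 0] := by
    ext i
    fin_cases i <;> simp
  rw [extendSub_span, Set.image_pair, hvertex]

theorem not_isImagChord_vertexJoin (q : ℕ) (hw : cuspidalForm w ≠ 0) :
    ¬ isImagChord F K q (vertexJoin F w) := by
  rintro ⟨-, t, -, hchord⟩
  have hmem : ![t ^ 3, t ^ 2, t, 1] ∈ extendSub F K (vertexJoin F w) :=
    hchord ▸ subset_span (Set.mem_insert _ _)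
  rw [extendSub_vertexJoin] at hmem
  have hwK : cuspidalForm (algebraMap F K ∘ w) ≠ 0 := by
    rwa [cuspidalForm_map, map_ne_zero]
  exact notMem_vertexJoin_of_mem_cubicVecs hwK (Or.inl ⟨t, rfl⟩) hmem

theorem isEA_vertexJoin (q : ℕ) (hw : cuspidalForm w ≠ 0) (hwA : w ∉ axisLine F) :
    isEA F K q (vertexJoin F w) := by
  refine ⟨isExternal_vertexJoin hw, not_isImagChord_vertexJoin K q hw, fun heq => ?_, ?_⟩
  · exact hwA (heq ▸ subset_span (Set.mem_insert_of_mem _ rfl))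
  · rw [vertexJoin_inf_axisLine hwA, Ne, span_singleton_eq_bot]
    exact fun h => by simpa using congrFun h 1

end

theorem stmt_18_general (q : ℕ) (F K : Type) [Field F] [Field K] [Algebra F K] {ρ : F}
    (hρ : ρ ≠ 0) :
    ∀ ℓ ∈ ({vertexJoin F ![0, 0, 1, 1], vertexJoin F ![1, 0, 1, 0],
        vertexJoin F ![1, 0, ρ, 0]} : Set (Submodule F (Fin 4 → F))),
      isEA F K q ℓ ∧ ℓ ⊓ axisLine F = span F {![0, 1, 0, 0]} := by
  have isEA_meeting_axis_at_vertex {w : Fin 4 → F} (hw : cuspidalForm w ≠ 0)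
      (hwA : w ∉ axisLine F) :
      isEA F K q (vertexJoin F w) ∧
        vertexJoin F w ⊓ axisLine F = span F {![0, 1, 0, 0]} :=
    ⟨isEA_vertexJoin K q hw hwA, vertexJoin_inf_axisLine hwA⟩
  rintro _ (rfl | rfl | rfl) <;>
    exact isEA_meeting_axis_at_vertex
      (by simp [cuspidalForm, hρ]) (by simp [mem_axisLine_iff])

theorem stmt_18 (q : ℕ) (F : Type) [Field F] [Fintype F]
    (hcard : Fintype.card F = q) (K : Type) [Field K] [Fintype K] [Algebra F K] (hcardK : Fintype.card K = q ^ 2) (hq : 9 ≤ q) (hq3 : q % 3 = 0)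
    (ρ : F) (hρ : ¬ ∃ s : F, s ^ 2 = ρ) :
    ∀ ℓ ∈ ({Submodule.span F ({![0, 1, 0, 0], ![0, 0, 1, 1]} : Set (Fin 4 → F)), Submodule.span F ({![0, 1, 0, 0], ![1, 0, 1, 0]} : Set (Fin 4 → F)), Submodule.span F ({![0, 1, 0, 0], ![1, 0, ρ, 0]} : Set (Fin 4 → F))} : Set (Submodule F (Fin 4 → F))),
      isEA F K q ℓ ∧ ℓ ⊓ axisLine F = Submodule.span F ({![0, 1, 0, 0]} : Set (Fin 4 → F)) := by
  exact stmt_18_general q F K fun hρ₀ => hρ ⟨0, by simp [hρ₀]⟩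
end
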